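/- Let n ∈ ℕ and α a partition of n. Let a_(α) = ∏_{μ<α} a_μ, b_(α) = ∏_{μ<α} b_μ, and a^(α), b^(α) the complementary products over μ ≥ α. Then the Cartan matrix C_(α) associated to the basic set {χ^λ : λ < α} on classes < α and the Cartan matrix C^(α) for {χ^λ : λ ≥ α} on classes ≥ α satisfy det C_(α) = b_(α)/a_(α) = a^(α)/b^(α) = det C^(α). -/

import Mathlib

open scoped Classical

namespace SnTable

variable {n : ℕ}

/-- The parts of a partition, listed in weakly decreasing order. -/
def descList (μ : Nat.Partition n) : List ℕ := (μ.parts.sort (· ≤ ·)).reverse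

/-- Strict lexicographic order on partitions of `n` (comparing the lists of parts
written in decreasing order). -/
def plex (μ ν : Nat.Partition n) : Prop := List.Lex (· < ·) (descList μ) (descList ν)

/-- Weak lexicographic order on partitions of `n`. -/
def plexLE (μ ν : Nat.Partition n) : Prop := μ = ν ∨ plex μ ν

/-- `a_μ = ∏ i^{m_i(μ)}`, the product of the parts of `μ`. -/
def aNum (μ : Nat.Partition n) : ℕ := μ.parts.prod

/-- `b_μ = ∏ m_i(μ)!`, the product of the factorials of the multiplicities. -/
def bNum (μ : Nat.Partition n) : ℕ :=
  ∏ i ∈ μ.parts.toFinset, (μ.parts.count i).factorial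

/-- `z_μ = a_μ b_μ`, the centralizer order of an element of cycle type `μ` in `S_n`. -/
def zNum (μ : Nat.Partition n) : ℕ := aNum μ * bNum μ

/-- The cycle type of a permutation of `Fin n`, as a partition of `n`. -/
def cycleTypePartition (g : Equiv.Perm (Fin n)) : Nat.Partition n :=
  (Fintype.card_fin n) ▸ g.partition

/-- The value at `g` of the permutation character `ξ^λ` of `S_n` obtained by inducing the
trivial character from the Young subgroup `S_λ`: it counts the ordered set partitions of
`Fin n` with block sizes `λ₁ ≥ λ₂ ≥ …` that are fixed by `g`. -/
def permChar (lam : Nat.Partition n) (g : Equiv.Perm (Fin n)) : ℕ :=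
  Fintype.card {f : Fin n → Fin (descList lam).length //
    (∀ x, f (g x) = f x) ∧
    ∀ j, (Finset.univ.filter fun x => f x = j).card = (descList lam).get j}

/-- `X` is the character table of the symmetric group `S_n`, with rows and columns indexed
by the partitions of `n`: each row is an irreducible character (as a class function, via
cycle types), distinct rows are distinct characters, and the labelling is the standard one,
pinned down by the fact that the transition matrix expressing the Young permutation
characters `ξ^λ` in terms of the rows of `X` is unitriangular with respect to the
lexicographic order. -/
def IsCharTable (X : Nat.Partition n → Nat.Partition n → ℤ) : Prop :=
  (∀ lam : Nat.Partition n, ∃ V : FDRep ℂ (Equiv.Perm (Fin n)),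
      CategoryTheory.Simple V ∧
      ∀ g : Equiv.Perm (Fin n), V.character g = (X lam (cycleTypePartition g) : ℂ)) ∧
  (∃ d : Nat.Partition n → Nat.Partition n → ℤ,
      (∀ lam, d lam lam = 1) ∧
      (∀ lam mu, d lam mu ≠ 0 → plexLE lam mu) ∧
      (∀ lam (g : Equiv.Perm (Fin n)),
        (permChar lam g : ℤ) = ∑ mu, d lam mu * X mu (cycleTypePartition g))) ∧
  Function.Injective X


theorem sort_reverse_eq (s : Multiset ℕ) :
    (s.sort (· ≤ ·)).reverse = s.sort (· ≥ ·) := by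
  apply List.Perm.eq_of_pairwise (le := (· ≥ ·))
  · intro a b _ _ h1 h2; exact le_antisymm h2 h1
  · rw [List.pairwise_reverse]; exact Multiset.pairwise_sort s _
  · exact Multiset.pairwise_sort s _
  · apply Multiset.coe_eq_coe.1
    simp

theorem exists_max_cons (s : Multiset ℕ) (hs : s ≠ 0) :
    ∃ m t, s = m ::ₘ t ∧ ∀ b ∈ t, b ≤ m := by
  obtain ⟨m, hm, h⟩ := s.toFinset.exists_max_image id (by simpa using hs)
  obtain ⟨t, rfl⟩ := Multiset.exists_cons_of_mem (Multiset.mem_toFinset.1 hm)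
  exact ⟨m, t, rfl, fun b hb => h b (by simp [hb])⟩

theorem refine_lex (k : ℕ) : ∀ P : Multiset (Multiset ℕ), P.card = k →
    (∀ p ∈ P, p ≠ 0 ∧ ∀ x ∈ p, 0 < x) →
    P.join.sort (· ≥ ·) = (P.map Multiset.sum).sort (· ≥ ·) ∨
    List.Lex (· < ·) (P.join.sort (· ≥ ·)) ((P.map Multiset.sum).sort (· ≥ ·)) := by
  induction k with
  | zero =>
    intro P hP _
    rw [Multiset.card_eq_zero] at hP
    subst hP; left; simp
  | succ k ih =>
    intro P hP hpos
    have hP0 : P ≠ 0 := by rintro rfl; simp at hP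
    obtain ⟨M, T, hT, hTM⟩ := exists_max_cons (P.map Multiset.sum) (by simpa using hP0)
    have hJ : P.join ≠ 0 := by
      obtain ⟨p, hp⟩ := Multiset.exists_mem_of_ne_zero hP0
      obtain ⟨x, hx⟩ := Multiset.exists_mem_of_ne_zero (hpos p hp).1
      intro h
      have : x ∈ P.join := Multiset.mem_join.2 ⟨p, hp, hx⟩
      simp [h] at this
    obtain ⟨m, t, ht, htm⟩ := exists_max_cons P.join hJ
    have hm : m ∈ P.join := by rw [ht]; simp
    obtain ⟨p, hp, hmp⟩ := Multiset.mem_join.1 hm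
    have h1 : m ≤ p.sum := Multiset.single_le_sum (by simp) m hmp
    have h2 : p.sum ≤ M := by
      have : p.sum ∈ P.map Multiset.sum := Multiset.mem_map_of_mem _ hp
      rw [hT, Multiset.mem_cons] at this
      rcases this with h | h
      · exact h.le
      · exact hTM _ h
    rcases (h1.trans h2).lt_or_eq with hlt | heq
    · right
      rw [ht, hT, Multiset.sort_cons _ _ _ htm, Multiset.sort_cons _ _ _ hTM]
      exact List.Lex.rel hlt
    · subst heq
      have hpm : p.sum = m := le_antisymm h2 h1
      obtain ⟨p', rfl⟩ := Multiset.exists_cons_of_mem hmp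
      have hp' : p' = 0 := by
        by_contra hne
        obtain ⟨x, hx⟩ := Multiset.exists_mem_of_ne_zero hne
        have h3 : x ≤ p'.sum := Multiset.single_le_sum (by simp) x hx
        have h4 := (hpos _ hp).2 x (by simp [hx])
        simp at hpm
        omega
      subst hp'
      obtain ⟨P', rfl⟩ := Multiset.exists_cons_of_mem hp
      have e1 : P'.join = t := by simpa using ht
      have e2 : P'.map Multiset.sum = T := by simpa using hT
      rw [ht, hT, Multiset.sort_cons _ _ _ htm, Multiset.sort_cons _ _ _ hTM, ← e1, ← e2]
      rcases ih P' (by simpa using hP) (fun q hq => hpos q (by simp [hq])) with h | h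
      · left; rw [h]
      · right; exact List.Lex.cons h

theorem bind_fiber {O J : Type*} [Fintype O] [Fintype J] [DecidableEq J] (h : O → J) (sz : O → ℕ) :
    ((Finset.univ : Finset J).val.map
      (fun j => ((Finset.univ.filter fun o => h o = j).val.map sz))).join
      = Finset.univ.val.map sz := by
  have : ∀ s : Finset J, (s.val.map
      (fun j => ((Finset.univ.filter fun o => h o = j).val.map sz))).join
      = (Finset.univ.filter fun o => h o ∈ s).val.map sz := by
    intro s
    induction s using Finset.induction_on with
    | empty => simp
    | insert a s ha ih =>
      rw [Finset.insert_val_of_notMem ha, Multiset.map_cons, Multiset.join_cons, ih,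
        ← Multiset.map_add]
      congr 1
      have hd : Disjoint (Finset.univ.filter fun o => h o = a)
          (Finset.univ.filter fun o => h o ∈ s) := by
        rw [Finset.disjoint_filter]
        rintro o _ rfl h2
        exact ha h2
      rw [← Finset.disjUnion_val _ _ hd]
      congr 1
      ext o
      simp
  rw [this]; simp

theorem fiber_lex {O J : Type*} [Fintype O] [Fintype J] [DecidableEq J] (h : O → J) (sz : O → ℕ) (w : J → ℕ)
    (hsz : ∀ o, 0 < sz o) (hw : ∀ j, 0 < w j)
    (hh : ∀ j, ∑ o with h o = j, sz o = w j) :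
    (Finset.univ.val.map sz).sort (· ≥ ·) = (Finset.univ.val.map w).sort (· ≥ ·) ∨
    List.Lex (· < ·) ((Finset.univ.val.map sz).sort (· ≥ ·))
      ((Finset.univ.val.map w).sort (· ≥ ·)) := by
  have := refine_lex _ ((Finset.univ : Finset J).val.map
      (fun j => ((Finset.univ.filter fun o => h o = j).val.map sz))) rfl ?_
  · rw [bind_fiber, Multiset.map_map] at this
    have e : (Multiset.sum ∘ fun j => ((Finset.univ.filter fun o => h o = j).val.map sz)) = w := by
      funext j
      exact hh j
    rwa [e] at this
  · intro p hp
    obtain ⟨j, _, rfl⟩ := Multiset.mem_map.1 hp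
    constructor
    · intro h0
      have := hh j
      have h1 : ∑ o with h o = j, sz o = 0 := by
        change Multiset.sum _ = 0
        rw [h0]; rfl
      have := hw j
      omega
    · intro x hx
      obtain ⟨o, _, rfl⟩ := Multiset.mem_map.1 hx
      exact hsz o

theorem count_diag {O J : Type*} [Fintype O] [Fintype J] [DecidableEq J] (sz : O → ℕ) (w : J → ℕ)
    (hw : ∀ j, 0 < w j)
    (hm : (Finset.univ : Finset O).val.map sz = Finset.univ.val.map w) :
    Fintype.card {h : O → J // ∀ j, ∑ o with h o = j, sz o = w j} =
      ∏ i ∈ ((Finset.univ : Finset J).val.map w).toFinset,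
        (((Finset.univ : Finset J).val.map w).count i).factorial := by
  have hcard : Fintype.card O = Fintype.card J := by
    have := congrArg Multiset.card hm
    simpa using this
  -- a size preserving bijection
  have hcnt : ∀ i, Fintype.card {o // sz o = i} = Fintype.card {j // w j = i} := by
    intro i
    have := congrArg (Multiset.count i) hm
    rw [Multiset.count_map, Multiset.count_map] at this
    rw [Fintype.card_subtype, Fintype.card_subtype]
    simp only [eq_comm (a := i)] at this
    exact this
  let e : O ≃ J := (Equiv.sigmaFiberEquiv sz).symm.trans
    ((Equiv.sigmaCongrRight fun i => Fintype.equivOfCardEq (hcnt i)).trans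
      (Equiv.sigmaFiberEquiv w))
  have he : ∀ o, w (e o) = sz o := by
    intro o
    simp only [e, Equiv.trans_apply]
    exact ((Fintype.equivOfCardEq (hcnt (sz o))) ⟨o, rfl⟩).2
  have hbij : ∀ h : O → J, (∀ j, ∑ o with h o = j, sz o = w j) →
      Function.Bijective h := by
    intro h hh
    rw [Fintype.bijective_iff_surjective_and_card]
    refine ⟨fun j => ?_, hcard⟩
    by_contra hne
    push Not at hne
    have := hh j
    rw [Finset.filter_false_of_mem (fun o _ => hne o)] at this
    have := hw j
    simp at *
    omega
  have hval : ∀ h : O → J, Function.Bijective h → ((∀ j, ∑ o with h o = j, sz o = w j) ↔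
      ∀ o, w (h o) = sz o) := by
    intro h hb
    have : ∀ o, ∑ o' with h o' = h o, sz o' = sz o := by
      intro o
      have : (Finset.univ.filter fun o' => h o' = h o) = {o} := by
        ext o'; simp [hb.1.eq_iff]
      rw [this]; simp
    constructor
    · intro hh o
      rw [← hh, this]
    · intro hh j
      obtain ⟨o, rfl⟩ := hb.2 j
      rw [this, hh]
  let E : {h : O → J // ∀ j, ∑ o with h o = j, sz o = w j} ≃
      {g : Equiv.Perm J // w ∘ g = w} :=
    { toFun := fun h => ⟨e.symm.trans (Equiv.ofBijective h.1 (hbij h.1 h.2)), by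
        funext j
        have := (hval h.1 (hbij h.1 h.2)).1 h.2 (e.symm j)
        simp only [Function.comp, Equiv.trans_apply, Equiv.ofBijective_apply]
        rw [this, ← he]; simp⟩
      invFun := fun g => ⟨fun o => g.1 (e o), (hval _ ((e.trans g.1).bijective)).2 (by
        intro o
        have := congrFun g.2 (e o)
        simp only [Function.comp] at this
        rw [← he o, ← this]; rfl)⟩
      left_inv := by intro h; ext o; simp
      right_inv := by intro g; ext o; simp }
  rw [Fintype.card_congr E, DomMulAct.stabilizer_card']
  refine Finset.prod_congr ?_ ?_
  · ext i; simp
  · intro i _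
    congr 1
    rw [Multiset.count_map, Fintype.card_subtype]
    simp only [eq_comm (a := i)]
    rfl

theorem parts_cast {a b : ℕ} (h : a = b) (p : Nat.Partition a) :
    (h ▸ p : Nat.Partition b).parts = p.parts := by
  subst h; rfl

theorem cycleTypePartition_parts (g : Equiv.Perm (Fin n)) :
    (cycleTypePartition g).parts =
      g.cycleType + Multiset.replicate (n - g.support.card) 1 := by
  rw [cycleTypePartition, parts_cast, Equiv.Perm.parts_partition]
  rw [Fintype.card_fin]

theorem partition_split (μ : Nat.Partition n) :
    μ.parts = μ.parts.filter (2 ≤ ·) +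
      Multiset.replicate (n - (μ.parts.filter (2 ≤ ·)).sum) 1 := by
  have h1 : μ.parts.filter (fun x => ¬ 2 ≤ x) =
      Multiset.replicate (μ.parts.filter (fun x => ¬ 2 ≤ x)).card 1 := by
    rw [Multiset.eq_replicate]
    refine ⟨rfl, fun b hb => ?_⟩
    rw [Multiset.mem_filter] at hb
    have := μ.parts_pos hb.1
    omega
  have h2 := Multiset.filter_add_not (2 ≤ ·) μ.parts
  have h3 := congrArg Multiset.sum h2
  rw [Multiset.sum_add, μ.parts_sum, h1] at h3
  simp only [Multiset.sum_replicate, smul_eq_mul, mul_one] at h3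
  have h4 : n - (μ.parts.filter (2 ≤ ·)).sum = (μ.parts.filter (fun x => ¬ 2 ≤ x)).card := by
    omega
  rw [h4, ← h1, h2]

theorem cycleTypePartition_eq_iff (g : Equiv.Perm (Fin n)) (μ : Nat.Partition n) :
    cycleTypePartition g = μ ↔ g.cycleType = μ.parts.filter (2 ≤ ·) := by
  constructor
  · rintro rfl
    rw [cycleTypePartition_parts, Multiset.filter_add,
      Multiset.filter_eq_self.2 fun _ => Equiv.Perm.two_le_of_mem_cycleType,
      Multiset.filter_eq_nil.2 fun a h => ?_, add_zero]
    rw [Multiset.eq_of_mem_replicate h]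
    decide
  · intro h
    apply Nat.Partition.ext
    rw [cycleTypePartition_parts, partition_split μ, ← h, Equiv.Perm.sum_cycleType]

theorem card_class (μ : Nat.Partition n) :
    (Finset.univ.filter fun g : Equiv.Perm (Fin n) => cycleTypePartition g = μ).card * zNum μ
      = n.factorial := by
  have h := Equiv.Perm.card_of_cycleType_mul_eq (Fin n) (μ.parts.filter (2 ≤ ·))
  have hs : (μ.parts.filter (2 ≤ ·)).sum ≤ n := by
    have h2 := congrArg Multiset.sum (Multiset.filter_add_not (2 ≤ ·) μ.parts)
    rw [Multiset.sum_add, μ.parts_sum] at h2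
    omega
  rw [if_pos ⟨by simpa using hs, fun a ha => (Multiset.mem_filter.1 ha).2⟩] at h
  simp only [Fintype.card_fin] at h
  rw [← h]
  congr 1
  · congr 1
    ext g
    simp [cycleTypePartition_eq_iff]
  · have hp := partition_split μ
    set m := μ.parts.filter (2 ≤ ·) with hm
    set k := n - m.sum
    have h1m : 1 ∉ m := by
      rw [hm, Multiset.mem_filter]; omega
    have ha : aNum μ = m.prod := by
      rw [aNum, hp]; simp
    have hb : bNum μ = k.factorial * ∏ i ∈ m.toFinset, (m.count i).factorial := by
      have e : bNum μ = ∏ i ∈ insert 1 m.toFinset, (μ.parts.count i).factorial := by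
        rw [bNum]
        apply Finset.prod_subset
        · intro i hi
          rw [Multiset.mem_toFinset, hp, Multiset.mem_add] at hi
          rcases hi with hi | hi
          · simp [hi]
          · simp [Multiset.eq_of_mem_replicate hi]
        · intro i _ hi
          rw [Multiset.mem_toFinset] at hi
          rw [Multiset.count_eq_zero_of_notMem hi]; rfl
      rw [e, Finset.prod_insert (by simpa using h1m)]
      congr 1
      · rw [hp, Multiset.count_add, Multiset.count_eq_zero_of_notMem h1m]
        simp
      · refine Finset.prod_congr rfl fun i hi => ?_
        have : i ≠ 1 := by rintro rfl; exact h1m (by simpa using hi)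
        rw [hp, Multiset.count_add, Multiset.count_replicate, if_neg this.symm, add_zero]
    rw [zNum, ha, hb]; ring

theorem zNum_pos (μ : Nat.Partition n) : 0 < zNum μ := by
  rcases Nat.eq_zero_or_pos (zNum μ) with h | h
  · have := card_class μ
    rw [h, mul_zero] at this
    exact absurd this.symm n.factorial_ne_zero
  · exact h

theorem exists_perm (μ : Nat.Partition n) :
    ∃ g : Equiv.Perm (Fin n), cycleTypePartition g = μ := by
  have h := card_class μ
  have : (Finset.univ.filter fun g : Equiv.Perm (Fin n) => cycleTypePartition g = μ).card ≠ 0 := by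
    intro h0
    rw [h0, zero_mul] at h
    exact n.factorial_ne_zero h.symm
  rw [Finset.card_ne_zero] at this
  obtain ⟨g, hg⟩ := this
  exact ⟨g, (Finset.mem_filter.1 hg).2⟩

theorem cycleTypePartition_inv (g : Equiv.Perm (Fin n)) :
    cycleTypePartition g⁻¹ = cycleTypePartition g := by
  rw [cycleTypePartition_eq_iff, Equiv.Perm.cycleType_inv, ← cycleTypePartition_eq_iff]

theorem orthog (X : Nat.Partition n → Nat.Partition n → ℤ) (hX : IsCharTable X)
    (l m : Nat.Partition n) :
    ∑ μ, (X l μ : ℚ) * X m μ / zNum μ = if l = m then 1 else 0 := by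
  obtain ⟨hV, -, hinj⟩ := hX
  obtain ⟨V, hVs, hVc⟩ := hV l
  obtain ⟨W, hWs, hWc⟩ := hV m
  have hinv : Invertible (Nat.card (Equiv.Perm (Fin n)) : ℂ) :=
    invertibleOfNonzero (by simp)
  have h := FDRep.char_orthonormal V W
  have hiso : Nonempty (V ≅ W) → l = m := by
    rintro ⟨i⟩
    apply hinj
    funext μ
    obtain ⟨g, rfl⟩ := exists_perm μ
    have := congrFun (FDRep.char_iso i) g
    rw [hVc, hWc] at this
    exact_mod_cast this
  have hiff : (if Nonempty (V ≅ W) then (1 : ℂ) else 0) = if l = m then 1 else 0 := by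
    by_cases hlm : l = m
    · subst hlm
      rw [if_pos rfl]
      -- both have the same character
      by_cases hne : Nonempty (V ≅ W)
      · rw [if_pos hne]
      · exfalso
        rw [if_neg hne] at h
        have h' := FDRep.char_orthonormal V V
        rw [if_pos ⟨CategoryTheory.Iso.refl V⟩] at h'
        have : V.character = W.character := by
          funext g; rw [hVc, hWc]
        rw [← this, h'] at h
        simp at h
    · rw [if_neg hlm, if_neg (fun h => hlm (hiso h))]
  rw [hiff] at h
  have hsum : ∑ g : Equiv.Perm (Fin n), V.character g * W.character g⁻¹ =
      ∑ μ : Nat.Partition n, (n.factorial : ℂ) * ((X l μ : ℂ) * X m μ / zNum μ) := by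
    rw [← Finset.sum_fiberwise Finset.univ (fun g : Equiv.Perm (Fin n) => cycleTypePartition g)]
    refine Finset.sum_congr rfl fun μ _ => ?_
    have : ∀ g ∈ Finset.univ.filter (fun g : Equiv.Perm (Fin n) => cycleTypePartition g = μ),
        V.character g * W.character g⁻¹ = (X l μ : ℂ) * X m μ := by
      intro g hg
      rw [hVc, hWc, cycleTypePartition_inv, (Finset.mem_filter.1 hg).2]
    rw [Finset.sum_congr rfl this, Finset.sum_const, nsmul_eq_mul, ← card_class μ]
    have hz : (zNum μ : ℂ) ≠ 0 := by exact_mod_cast (zNum_pos μ).ne'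
    push_cast
    field_simp
  rw [hsum, ← Finset.mul_sum] at h
  have hc : (Nat.card (Equiv.Perm (Fin n)) : ℂ) = n.factorial := by
    rw [Nat.card_eq_fintype_card, Fintype.card_perm, Fintype.card_fin]
  have hf : (n.factorial : ℂ) ≠ 0 := by exact_mod_cast n.factorial_ne_zero
  rw [hc, ← mul_assoc, inv_mul_cancel₀ hf, one_mul] at h
  have h2 : ((∑ μ, (X l μ : ℚ) * X m μ / zNum μ : ℚ) : ℂ) =
      ((if l = m then 1 else 0 : ℚ) : ℂ) := by
    push_cast
    rw [h]
    split_ifs <;> simp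
  exact_mod_cast h2

theorem orbits (g : Equiv.Perm (Fin n)) :
    ∃ (O : Type) (_ : Fintype O) (q : Fin n → O), Function.Surjective q ∧
      (∀ x, q (g x) = q x) ∧ (∀ x y, q x = q y → g.SameCycle x y) ∧
      (Finset.univ : Finset O).val.map (fun o => (Finset.univ.filter fun x => q x = o).card)
        = (cycleTypePartition g).parts := by
  let q : Fin n → ({c // c ∈ g.cycleFactorsFinset} ⊕ {x // g x = x}) := fun x =>
    if h : g x = x then Sum.inr ⟨x, h⟩ else
      Sum.inl ⟨g.cycleOf x, Equiv.Perm.cycleOf_mem_cycleFactorsFinset_iff.2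
        (Equiv.Perm.mem_support.2 h)⟩
  have q1 : ∀ x (h : g x = x), q x = Sum.inr ⟨x, h⟩ := fun x h => dif_pos h
  have q2 : ∀ x (h : ¬ g x = x), q x = Sum.inl ⟨g.cycleOf x,
      Equiv.Perm.cycleOf_mem_cycleFactorsFinset_iff.2 (Equiv.Perm.mem_support.2 h)⟩ :=
    fun x h => dif_neg h
  have fib1 : ∀ c : {c // c ∈ g.cycleFactorsFinset},
      (Finset.univ.filter fun x => q x = Sum.inl c) = c.1.support := by
    rintro ⟨c, hc⟩
    ext x
    simp only [Finset.mem_filter, Finset.mem_univ, true_and]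
    by_cases h : g x = x
    · rw [q1 x h]
      simp only [reduceCtorEq, false_iff]
      intro hx
      have := Equiv.Perm.mem_cycleFactorsFinset_support_le hc hx
      exact Equiv.Perm.mem_support.1 this h
    · rw [q2 x h]
      simp only [Sum.inl.injEq, Subtype.mk.injEq]
      constructor
      · rintro rfl
        rw [Equiv.Perm.mem_support_cycleOf_iff]
        exact ⟨Equiv.Perm.SameCycle.refl _ _, Equiv.Perm.mem_support.2 h⟩
      · intro hx
        exact (Equiv.Perm.cycle_is_cycleOf hx hc).symm
  have fib2 : ∀ y : {x // g x = x},
      (Finset.univ.filter fun x => q x = Sum.inr y) = {y.1} := by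
    rintro ⟨y, hy⟩
    ext x
    simp only [Finset.mem_filter, Finset.mem_univ, true_and, Finset.mem_singleton]
    by_cases h : g x = x
    · rw [q1 x h]; simp
    · rw [q2 x h]
      simp only [reduceCtorEq, false_iff]
      rintro rfl
      exact h hy
  refine ⟨({c // c ∈ g.cycleFactorsFinset} ⊕ {x // g x = x}), inferInstance, q, ?_, ?_, ?_, ?_⟩
  · rintro (c | y)
    · have hne : c.1.support.Nonempty :=
        (Equiv.Perm.mem_cycleFactorsFinset_iff.1 c.2).1.nonempty_support
      obtain ⟨x, hx⟩ := hne
      rw [← fib1 c] at hx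
      exact ⟨x, (Finset.mem_filter.1 hx).2⟩
    · exact ⟨y.1, q1 _ y.2⟩
  · intro x
    by_cases h : g x = x
    · rw [h]
    · have h' : ¬ g (g x) = g x := fun h2 => h (g.injective h2)
      rw [q2 _ h, q2 _ h']
      simp
  · intro x y hxy
    by_cases h : g x = x
    · by_cases h' : g y = y
      · rw [q1 x h, q1 y h'] at hxy
        simp at hxy
        rw [hxy]
      · rw [q1 x h, q2 y h'] at hxy
        simp at hxy
    · by_cases h' : g y = y
      · rw [q2 x h, q1 y h'] at hxy
        simp at hxy
      · rw [q2 x h, q2 y h'] at hxy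
        simp only [Sum.inl.injEq, Subtype.mk.injEq] at hxy
        exact (Equiv.Perm.sameCycle_iff_cycleOf_eq_of_mem_support
          (Equiv.Perm.mem_support.2 h) (Equiv.Perm.mem_support.2 h')).2 hxy
  · rw [cycleTypePartition_parts]
    have hu : (Finset.univ : Finset ({c // c ∈ g.cycleFactorsFinset} ⊕ {x // g x = x})) = Finset.univ.disjSum Finset.univ := by
      ext (o | o) <;> simp
    rw [hu]
    simp only [Finset.disjSum, Multiset.disjSum, Multiset.map_add, Multiset.map_map,
      Function.comp_def]
    congr 1
    · refine (Multiset.map_congr rfl (fun c _ => (?_ : _ = c.1.support.card))).trans ?_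
      · rw [← fib1 c]; congr!
      rw [Equiv.Perm.cycleType_def]
      have : (Finset.univ : Finset {c // c ∈ g.cycleFactorsFinset}).val.map Subtype.val =
          g.cycleFactorsFinset.val := by
        rw [Finset.univ_eq_attach, Finset.attach_val]
        exact Multiset.attach_map_val g.cycleFactorsFinset.val
      conv_rhs => rw [← this, Multiset.map_map]
      rfl
    · refine (Multiset.map_congr rfl (fun c _ => (?_ : _ = 1))).trans ?_
      · rw [← Finset.card_singleton c.1, ← fib2 c]; congr!
      rw [Multiset.map_const']
      congr 1
      change (Finset.univ : Finset {x // g x = x}).card = _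
      rw [Finset.card_univ, Fintype.card_subtype]
      have := Finset.card_compl g.support
      rw [Fintype.card_fin] at this
      rw [← this]
      congr 1
      ext x; simp

theorem descList_eq (μ : Nat.Partition n) : descList μ = μ.parts.sort (· ≥ ·) :=
  sort_reverse_eq _

theorem descList_coe (μ : Nat.Partition n) : (descList μ : Multiset ℕ) = μ.parts := by
  rw [descList_eq]; simp

theorem descList_map (μ : Nat.Partition n) :
    (Finset.univ : Finset (Fin (descList μ).length)).val.map (descList μ).get = μ.parts := by
  rw [← descList_coe]
  simp

theorem descList_pos (μ : Nat.Partition n) (j) : 0 < (descList μ).get j := by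
  apply μ.parts_pos
  rw [← descList_coe]
  simp

theorem permChar_eq (lam : Nat.Partition n) (g : Equiv.Perm (Fin n))
    {O : Type} [Fintype O] (q : Fin n → O) (hq : Function.Surjective q)
    (h1 : ∀ x, q (g x) = q x) (h2 : ∀ x y, q x = q y → g.SameCycle x y) :
    permChar lam g = Fintype.card {h : O → Fin (descList lam).length //
      ∀ j, ∑ o with h o = j, (Finset.univ.filter fun x => q x = o).card = (descList lam).get j} := by
  have key : ∀ (h : O → Fin (descList lam).length) j,
      ∑ o with h o = j, (Finset.univ.filter fun x => q x = o).card =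
        (Finset.univ.filter fun x => h (q x) = j).card := by
    intro h j
    rw [Finset.card_eq_sum_card_fiberwise (f := q) (t := Finset.univ.filter fun o => h o = j)]
    · refine Finset.sum_congr rfl fun o ho => ?_
      congr 1
      ext x
      simp only [Finset.mem_filter, Finset.mem_univ, true_and] at ho ⊢
      constructor
      · rintro rfl; exact ⟨ho, rfl⟩
      · exact fun h => h.2
    · intro x hx
      simpa using hx
  have hinv : ∀ f : Fin n → Fin (descList lam).length, (∀ x, f (g x) = f x) →
      ∀ x y, g.SameCycle x y → f x = f y := by
    intro f hf x y ⟨i, hi⟩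
    have hf' : ∀ x, f (g⁻¹ x) = f x := fun x => by
      rw [← hf (g⁻¹ x)]; simp
    have : ∀ (i : ℤ) (x), f ((g ^ i) x) = f x := by
      intro i
      induction i using Int.induction_on with
      | zero => simp
      | succ i ih => intro x; rw [zpow_add_one, Equiv.Perm.mul_apply, ih, hf]
      | pred i ih => intro x; rw [zpow_sub_one, Equiv.Perm.mul_apply, ih, hf']
    rw [← hi, this]
  rw [permChar]
  symm
  refine Fintype.card_of_bijective (f := fun h => ⟨fun x => h.1 (q x),
    fun x => by simp only [h1], fun j => by rw [← key]; exact h.2 j⟩) ⟨?_, ?_⟩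
  · rintro ⟨h, hh⟩ ⟨h', hh'⟩ he
    simp only [Subtype.mk.injEq] at he ⊢
    funext o
    obtain ⟨x, rfl⟩ := hq o
    exact congrFun he x
  · rintro ⟨f, hf, hf'⟩
    have hfac : (fun x => f (Function.surjInv hq (q x))) = f := by
      funext x
      apply hinv f hf
      apply h2
      rw [Function.surjInv_eq hq]
    refine ⟨⟨fun o => f (Function.surjInv hq o), fun j => ?_⟩, ?_⟩
    · rw [key, ← hf' j]
      congr 1
      ext x
      simp only [Finset.mem_filter, Finset.mem_univ, true_and]
      rw [congrFun hfac x]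
    · simp only [Subtype.mk.injEq]
      exact hfac

theorem permChar_diag (g : Equiv.Perm (Fin n)) :
    permChar (cycleTypePartition g) g = bNum (cycleTypePartition g) := by
  obtain ⟨O, _, q, hq, h1, h2, h3⟩ := orbits g
  rw [permChar_eq _ g q hq h1 h2]
  have := count_diag (fun o => (Finset.univ.filter fun x => q x = o).card)
    (descList (cycleTypePartition g)).get (descList_pos _) (by rw [h3, descList_map])
  rw [descList_map] at this
  rw [bNum]
  convert this

theorem descList_injective : Function.Injective (descList (n := n)) := by
  intro a b h
  apply Nat.Partition.ext
  rw [← descList_coe, ← descList_coe, h]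

theorem permChar_tri (lam : Nat.Partition n) (g : Equiv.Perm (Fin n)) (h0 : permChar lam g ≠ 0) :
    plexLE (cycleTypePartition g) lam := by
  obtain ⟨O, _, q, hq, h1, h2, h3⟩ := orbits g
  rw [permChar_eq _ g q hq h1 h2] at h0
  obtain ⟨⟨h, hh⟩⟩ := Fintype.card_pos_iff.1 (Nat.pos_of_ne_zero h0)
  have := fiber_lex h _ _ (fun o => by
    obtain ⟨x, hx⟩ := hq o
    exact Finset.card_pos.2 ⟨x, by simp [hx]⟩) (descList_pos lam) hh
  rw [h3, descList_map, ← descList_eq, ← descList_eq] at this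
  rcases this with h | h
  · exact Or.inl (descList_injective h)
  · exact Or.inr h

/-- The lexicographic order on partitions as a linear order. -/
@[reducible] noncomputable def plexOrder (n : ℕ) : LinearOrder (Nat.Partition n) :=
  LinearOrder.lift' descList descList_injective

theorem plex_iff (a b : Nat.Partition n) : plex a b ↔ (plexOrder n).lt a b := Iff.rfl

theorem plexLE_iff (a b : Nat.Partition n) : plexLE a b ↔ (plexOrder n).le a b := by
  let _ := plexOrder n
  change _ ↔ a ≤ b
  rw [le_iff_eq_or_lt]
  rfl

theorem det_upper (X : Nat.Partition n → Nat.Partition n → ℤ) (hX : IsCharTable X)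
    (p : Nat.Partition n → Prop) (hp : ∀ a b, p a → plexLE a b → p b) :
    (Matrix.of fun (i j : {κ // p κ}) => (X i.1 j.1 : ℚ)).det =
      ∏ μ : {κ // p κ}, (bNum μ.1 : ℚ) := by
  obtain ⟨-, ⟨d, hd1, hd2, hd3⟩, -⟩ := hX
  choose g hg using exists_perm (n := n)
  let dm : Matrix {κ // p κ} {κ // p κ} ℚ := Matrix.of fun i j => (d i.1 j.1 : ℚ)
  let Mm : Matrix {κ // p κ} {κ // p κ} ℚ := Matrix.of fun i j => (permChar i.1 (g j.1) : ℚ)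
  have hmul : dm * (Matrix.of fun (i j : {κ // p κ}) => (X i.1 j.1 : ℚ)) = Mm := by
    ext i j
    simp only [Matrix.mul_apply, dm, Mm, Matrix.of_apply]
    have h1 := hd3 i.1 (g j.1)
    rw [hg] at h1
    have h2 : ((permChar i.1 (g j.1) : ℤ) : ℚ) = ((∑ mu, d i.1 mu * X mu j.1 : ℤ) : ℚ) := by
      rw [h1]
    push_cast at h2
    rw [h2]
    rw [← Finset.sum_filter_of_ne (p := p)]
    · exact (Finset.sum_subtype (Finset.univ.filter p) (by simp)
        (fun mu => (d i.1 mu : ℚ) * X mu j.1)).symm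
    · intro mu _ hne
      have : d i.1 mu ≠ 0 := fun h => hne (by simp [h])
      exact hp _ _ i.2 (hd2 _ _ this)
  have hdd : dm.det = 1 := by
    let _ := plexOrder n
    have : dm.IsUpperTriangular := by
      intro i j hij
      by_contra hne
      have : d i.1 j.1 ≠ 0 := fun h => hne (by simp [dm, h])
      have h2 := (plexLE_iff _ _).1 (hd2 _ _ this)
      exact absurd hij (not_lt.2 h2)
    have h3 := Matrix.det_of_isUpperTriangular this
    have h4 : ∏ i, dm i i = 1 := Finset.prod_eq_one fun i _ => by simp [dm, hd1]
    rw [h4] at h3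
    convert h3
  have hMd : Mm.det = ∏ μ : {κ // p κ}, (bNum μ.1 : ℚ) := by
    let _ := plexOrder n
    have : Mm.IsLowerTriangular := by
      intro i j hij
      by_contra hne
      have : permChar i.1 (g j.1) ≠ 0 := fun h => hne (by simp [Mm, h])
      have h2 := permChar_tri _ _ this
      rw [hg] at h2
      have h2 := (plexLE_iff _ _).1 h2
      exact absurd hij (not_lt.2 h2)
    have h3 := Matrix.det_of_isLowerTriangular _ this
    have h4 : ∏ i, Mm i i = ∏ μ : {κ // p κ}, (bNum μ.1 : ℚ) :=
      Finset.prod_congr rfl fun i _ => by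
        have := permChar_diag (g i.1)
        rw [hg] at this
        simp [Mm, this]
    rw [h4] at h3
    convert h3
  have := congrArg Matrix.det hmul
  rw [Matrix.det_mul, hdd, one_mul, hMd] at this
  exact this

theorem rowmul (X : Nat.Partition n → Nat.Partition n → ℤ) (hX : IsCharTable X) :
    (Matrix.of fun i j => (X i j : ℚ)) * (Matrix.of fun i j => (X j i : ℚ) / zNum i) = 1 := by
  ext i j
  simp only [Matrix.mul_apply, Matrix.of_apply, Matrix.one_apply]
  have := orthog X hX i j
  simp only [mul_div_assoc] at this
  convert this

theorem colorth (X : Nat.Partition n → Nat.Partition n → ℤ) (hX : IsCharTable X)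
    (μ ν : Nat.Partition n) :
    ∑ l, (X l μ : ℚ) * X l ν = if μ = ν then (zNum μ : ℚ) else 0 := by
  have h := mul_eq_one_comm.1 (rowmul X hX)
  have h2 := congrFun (congrFun h μ) ν
  simp only [Matrix.mul_apply, Matrix.of_apply, Matrix.one_apply] at h2
  have hz : (zNum μ : ℚ) ≠ 0 := by exact_mod_cast (zNum_pos μ).ne'
  have h3 : ∑ l, (X l μ : ℚ) * X l ν = zNum μ * ∑ l, (X l μ : ℚ) / zNum μ * X l ν := by
    rw [Finset.mul_sum]
    refine Finset.sum_congr rfl fun l _ => ?_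
    field_simp
  rw [h3, h2]
  by_cases hmn : μ = ν <;> simp [hmn]

theorem cartan_det (X : Nat.Partition n → Nat.Partition n → ℤ) (hX : IsCharTable X)
    (p : Nat.Partition n → Prop) (D : Nat.Partition n → {κ // p κ} → ℤ)
    (hD : ∀ (lam : Nat.Partition n) (μ : {μ // p μ}),
      X lam μ.1 = ∑ κ : {κ // p κ}, D lam κ * X κ.1 μ.1)
    (C : Matrix {κ // p κ} {κ // p κ} ℤ)
    (hC : C = Matrix.of fun κ κ' => ∑ lam : Nat.Partition n, D lam κ * D lam κ') :
    (C.det : ℚ) * (Matrix.of fun (i j : {κ // p κ}) => (X i.1 j.1 : ℚ)).det ^ 2 =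
      ∏ μ : {κ // p κ}, (zNum μ.1 : ℚ) := by
  let Xp : Matrix {κ // p κ} {κ // p κ} ℚ := Matrix.of fun i j => (X i.1 j.1 : ℚ)
  let Dq : Matrix (Nat.Partition n) {κ // p κ} ℚ := Matrix.of fun l j => (D l j : ℚ)
  have h1 : C.map (Int.castRingHom ℚ) = Dq.transpose * Dq := by
    ext i j
    simp [hC, Dq, Matrix.mul_apply]
  have h2 : Dq * Xp = Matrix.of fun l (j : {κ // p κ}) => (X l j.1 : ℚ) := by
    ext l j
    simp only [Dq, Xp, Matrix.mul_apply, Matrix.of_apply]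
    rw [hD l j]
    push_cast
    rfl
  have h3 : Xp.transpose * C.map (Int.castRingHom ℚ) * Xp =
      Matrix.diagonal fun μ : {κ // p κ} => (zNum μ.1 : ℚ) := by
    have : Xp.transpose * C.map (Int.castRingHom ℚ) * Xp = (Dq * Xp).transpose * (Dq * Xp) := by
      rw [h1, Matrix.transpose_mul]
      simp only [Matrix.mul_assoc]
    rw [this, h2]
    ext i j
    simp only [Matrix.mul_apply, Matrix.transpose_apply, Matrix.of_apply, Matrix.diagonal_apply]
    rw [colorth X hX]
    simp only [Subtype.ext_iff]
  have h4 := congrArg Matrix.det h3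
  rw [Matrix.det_mul, Matrix.det_mul, Matrix.det_transpose, Matrix.det_diagonal] at h4
  have h5 : (C.map (Int.castRingHom ℚ)).det = (C.det : ℚ) := by
    have := RingHom.map_det (Int.castRingHom ℚ) C
    simpa using this.symm
  rw [h5] at h4
  rw [← h4]
  ring

theorem jacobi (X : Nat.Partition n → Nat.Partition n → ℤ) (hX : IsCharTable X)
    (p : Nat.Partition n → Prop) :
    (Matrix.of fun i j : Nat.Partition n => (X i j : ℚ)).det *
      (Matrix.of fun (i j : {κ // ¬ p κ}) => (X i.1 j.1 : ℚ)).det =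
    (Matrix.of fun (i j : {κ // p κ}) => (X i.1 j.1 : ℚ)).det *
      ∏ μ : {κ // ¬ p κ}, (zNum μ.1 : ℚ) := by
  let A : Matrix (Nat.Partition n) (Nat.Partition n) ℚ := Matrix.of fun i j => (X i j : ℚ)
  let B : Matrix (Nat.Partition n) (Nat.Partition n) ℚ :=
    Matrix.of fun i j => (X j i : ℚ) / zNum i
  let N : Matrix (Nat.Partition n) (Nat.Partition n) ℚ :=
    Matrix.of fun i j => if p j then (1 : Matrix _ _ ℚ) i j else B i j
  have hAB : A * B = 1 := rowmul X hX
  have hAN1 : ∀ i j, p j → (A * N) i j = A i j := by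
    intro i j hj
    have : (A * N) i j = (A * (1 : Matrix (Nat.Partition n) (Nat.Partition n) ℚ)) i j := by
      simp only [Matrix.mul_apply, N, Matrix.of_apply, if_pos hj]
    rw [this, Matrix.mul_one]
  have hAN2 : ∀ i j, ¬ p j → (A * N) i j = (1 : Matrix _ _ ℚ) i j := by
    intro i j hj
    rw [← hAB]
    simp only [Matrix.mul_apply, N, Matrix.of_apply, if_neg hj]
  have hN := Matrix.twoBlockTriangular_det N p (by
    intro i hi j hj
    simp only [N, Matrix.of_apply, if_pos hj]
    exact Matrix.one_apply_ne (by rintro rfl; exact hi hj))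
  have hAN := Matrix.twoBlockTriangular_det' (A * N) p (by
    intro i hi j hj
    rw [hAN2 i j hj]
    exact Matrix.one_apply_ne (by rintro rfl; exact hj hi))
  have e1 : Matrix.toSquareBlockProp N p = 1 := by
    ext i j
    simp [Matrix.toSquareBlockProp_def, N, j.2, Matrix.one_apply, Subtype.ext_iff]
  have e2 : Matrix.toSquareBlockProp (A * N) p =
      Matrix.of fun (i j : {κ // p κ}) => (X i.1 j.1 : ℚ) := by
    ext i j
    simp [Matrix.toSquareBlockProp_def, hAN1 _ _ j.2, A]
  have e3 : Matrix.toSquareBlockProp (A * N) (fun i => ¬ p i) = 1 := by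
    ext i j
    simp [Matrix.toSquareBlockProp_def, hAN2 _ _ j.2, Matrix.one_apply, Subtype.ext_iff]
  have e4 : Matrix.diagonal (fun μ : {κ // ¬ p κ} => (zNum μ.1 : ℚ)) *
      Matrix.toSquareBlockProp N (fun i => ¬ p i) =
      (Matrix.of fun (i j : {κ // ¬ p κ}) => (X i.1 j.1 : ℚ)).transpose := by
    ext i j
    have hz : (zNum i.1 : ℚ) ≠ 0 := by exact_mod_cast (zNum_pos i.1).ne'
    rw [Matrix.diagonal_mul]
    simp only [Matrix.toSquareBlockProp_def, N, B, Matrix.of_apply, if_neg j.2,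
      Matrix.transpose_apply]
    field_simp
  have e5 := congrArg Matrix.det e4
  rw [Matrix.det_mul, Matrix.det_diagonal, Matrix.det_transpose] at e5
  rw [e1, Matrix.det_one, one_mul] at hN
  rw [e2, e3, Matrix.det_one, mul_one, Matrix.det_mul, hN] at hAN
  rw [← e5, ← hAN]
  change A.det * _ = _
  ring

theorem jacobi_compl (X : Nat.Partition n → Nat.Partition n → ℤ) (hX : IsCharTable X)
    (p q : Nat.Partition n → Prop) (hq : ∀ κ, q κ ↔ ¬ p κ) :
    (Matrix.of fun i j : Nat.Partition n => (X i j : ℚ)).det *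
      (Matrix.of fun (i j : {κ // q κ}) => (X i.1 j.1 : ℚ)).det =
    (Matrix.of fun (i j : {κ // p κ}) => (X i.1 j.1 : ℚ)).det *
      ∏ μ : {κ // q κ}, (zNum μ.1 : ℚ) := by
  obtain rfl : q = fun κ => ¬ p κ := by funext κ; exact propext (hq κ)
  convert jacobi X hX p

theorem det_full (X : Nat.Partition n → Nat.Partition n → ℤ) (hX : IsCharTable X) :
    (Matrix.of fun i j : Nat.Partition n => (X i j : ℚ)).det = ∏ μ : Nat.Partition n, (bNum μ : ℚ) := by
  have h := det_upper X hX (fun _ => True) (fun _ _ _ _ => trivial)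
  let e : {κ : Nat.Partition n // True} ≃ Nat.Partition n :=
    Equiv.subtypeUnivEquiv (fun _ => trivial)
  rw [← Matrix.det_submatrix_equiv_self e, ← Equiv.prod_comp e]
  convert h <;> rfl

theorem prod_ab (X : Nat.Partition n → Nat.Partition n → ℤ) (hX : IsCharTable X) :
    (∏ μ : Nat.Partition n, (bNum μ : ℚ)) ^ 2 = ∏ μ : Nat.Partition n, (zNum μ : ℚ) := by
  rw [← det_full X hX]
  let A : Matrix (Nat.Partition n) (Nat.Partition n) ℚ := Matrix.of fun i j => (X i j : ℚ)
  have h : A.transpose * A = Matrix.diagonal fun μ => (zNum μ : ℚ) := by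
    ext i j
    simp only [Matrix.mul_apply, Matrix.transpose_apply, A, Matrix.of_apply,
      Matrix.diagonal_apply]
    rw [colorth X hX]
  have h2 := congrArg Matrix.det h
  rw [Matrix.det_mul, Matrix.det_transpose, Matrix.det_diagonal] at h2
  rw [← h2, sq]

theorem prod_split (p q : Nat.Partition n → Prop) (hq : ∀ κ, q κ ↔ ¬ p κ)
    (f : Nat.Partition n → ℚ) :
    (∏ μ : {κ // p κ}, f μ.1) * ∏ μ : {κ // q κ}, f μ.1 = ∏ μ, f μ := by
  obtain rfl : q = fun κ => ¬ p κ := by funext κ; exact propext (hq κ)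
  convert Fintype.prod_subtype_mul_prod_subtype p f

/-- **Theorem 3.6.** Let `α` be a partition of `n`, `a_(α) = ∏_{μ<α} a_μ`,
`b_(α) = ∏_{μ<α} b_μ`, and `a^(α), b^(α)` the complementary products over `μ ≥ α`.  Let `C_(α)`
(resp. `C^(α)`) be the Cartan matrix `DᵀD` of the basic set `{χ^λ : λ < α}` on the classes `< α`
(resp. of `{χ^λ : λ ≥ α}` on the classes `≥ α`), where `D` is the integral decomposition matrix
expressing all character restrictions in terms of the basic set.  Then
`det C_(α) = b_(α)/a_(α) = a^(α)/b^(α) = det C^(α)`. -/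
theorem Cartan_det_small_and_large (n : ℕ) (X : Nat.Partition n → Nat.Partition n → ℤ)
    (hX : IsCharTable X) (α : Nat.Partition n)
    (D : Nat.Partition n → {κ : Nat.Partition n // plex κ α} → ℤ)
    (hD : ∀ (lam : Nat.Partition n) (μ : {μ : Nat.Partition n // plex μ α}),
      X lam μ.1 = ∑ κ : {κ : Nat.Partition n // plex κ α}, D lam κ * X κ.1 μ.1)
    (D' : Nat.Partition n → {κ : Nat.Partition n // plexLE α κ} → ℤ)
    (hD' : ∀ (lam : Nat.Partition n) (μ : {μ : Nat.Partition n // plexLE α μ}),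
      X lam μ.1 = ∑ κ : {κ : Nat.Partition n // plexLE α κ}, D' lam κ * X κ.1 μ.1)
    (C : Matrix {κ : Nat.Partition n // plex κ α} {κ : Nat.Partition n // plex κ α} ℤ)
    (hC : C = Matrix.of fun κ κ' => ∑ lam : Nat.Partition n, D lam κ * D lam κ')
    (C' : Matrix {κ : Nat.Partition n // plexLE α κ} {κ : Nat.Partition n // plexLE α κ} ℤ)
    (hC' : C' = Matrix.of fun κ κ' => ∑ lam : Nat.Partition n, D' lam κ * D' lam κ') :
    (C.det : ℚ) = (∏ μ : {μ : Nat.Partition n // plex μ α}, (bNum μ.1 : ℚ)) /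
        (∏ μ : {μ : Nat.Partition n // plex μ α}, (aNum μ.1 : ℚ)) ∧
    (∏ μ : {μ : Nat.Partition n // plex μ α}, (bNum μ.1 : ℚ)) /
        (∏ μ : {μ : Nat.Partition n // plex μ α}, (aNum μ.1 : ℚ)) =
      (∏ μ : {μ : Nat.Partition n // plexLE α μ}, (aNum μ.1 : ℚ)) /
        (∏ μ : {μ : Nat.Partition n // plexLE α μ}, (bNum μ.1 : ℚ)) ∧
    (C'.det : ℚ) = (∏ μ : {μ : Nat.Partition n // plexLE α μ}, (aNum μ.1 : ℚ)) /
        (∏ μ : {μ : Nat.Partition n // plexLE α μ}, (bNum μ.1 : ℚ)) := by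
  have hcomp : ∀ κ, plexLE α κ ↔ ¬ plex κ α := by
    intro κ
    let _ := plexOrder n
    rw [plexLE_iff, plex_iff]
    exact not_lt.symm
  have hup : ∀ a b, plexLE α a → plexLE a b → plexLE α b := by
    intro a b h1 h2
    let _ := plexOrder n
    rw [plexLE_iff] at *
    exact le_trans h1 h2
  have hL := det_upper X hX (plexLE α) hup
  have hJ := jacobi_compl X hX (fun κ => plex κ α) (plexLE α) hcomp
  have hc := cartan_det X hX _ D hD C hC
  have hc' := cartan_det X hX _ D' hD' C' hC'
  have hab := prod_ab X hX
  have hz : ∀ μ : Nat.Partition n, (zNum μ : ℚ) = aNum μ * bNum μ := fun μ => by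
    simp [zNum]
  have ha0 : ∀ μ : Nat.Partition n, 0 < (aNum μ : ℚ) := fun μ => by
    have := Nat.pos_of_mul_pos_right (zNum_pos μ)
    exact_mod_cast this
  have hb0 : ∀ μ : Nat.Partition n, 0 < (bNum μ : ℚ) := fun μ => by
    have := Nat.pos_of_mul_pos_left (zNum_pos μ)
    exact_mod_cast this
  rw [det_full X hX] at hJ
  rw [hL] at hJ hc'
  simp only [hz, Finset.prod_mul_distrib] at hJ hc hc' hab
  rw [← prod_split _ _ hcomp (fun μ => (bNum μ : ℚ))] at hJ hab
  rw [← prod_split _ _ hcomp (fun μ => (aNum μ : ℚ))] at hab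
  have paS : 0 < ∏ μ : {μ : Nat.Partition n // plex μ α}, (aNum μ.1 : ℚ) :=
    Finset.prod_pos fun μ _ => ha0 _
  have pbS : 0 < ∏ μ : {μ : Nat.Partition n // plex μ α}, (bNum μ.1 : ℚ) :=
    Finset.prod_pos fun μ _ => hb0 _
  have paL : 0 < ∏ μ : {μ : Nat.Partition n // plexLE α μ}, (aNum μ.1 : ℚ) :=
    Finset.prod_pos fun μ _ => ha0 _
  have pbL : 0 < ∏ μ : {μ : Nat.Partition n // plexLE α μ}, (bNum μ.1 : ℚ) :=
    Finset.prod_pos fun μ _ => hb0 _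
  generalize (∏ μ : {μ : Nat.Partition n // plex μ α}, (aNum μ.1 : ℚ)) = aS at *
  generalize (∏ μ : {μ : Nat.Partition n // plex μ α}, (bNum μ.1 : ℚ)) = bS at *
  generalize (∏ μ : {μ : Nat.Partition n // plexLE α μ}, (aNum μ.1 : ℚ)) = aL at *
  generalize (∏ μ : {μ : Nat.Partition n // plexLE α μ}, (bNum μ.1 : ℚ)) = bL at *
  generalize (Matrix.of fun (i j : {κ // plex κ α}) => (X i.1 j.1 : ℚ)).det = xS at *
  have hab' : bS * bL = aS * aL := by
    apply mul_right_cancel₀ (mul_pos pbS pbL).ne'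
    linear_combination hab
  have hxS : xS = aS := by
    apply mul_right_cancel₀ (mul_pos paL pbL).ne'
    linear_combination (-1 : ℚ) * hJ + bL * hab'
  subst hxS
  refine ⟨?_, ?_, ?_⟩
  · rw [eq_div_iff paS.ne']
    apply mul_right_cancel₀ paS.ne'
    linear_combination hc
  · rw [div_eq_div_iff paS.ne' pbL.ne']
    linear_combination hab'
  · rw [eq_div_iff pbL.ne']
    apply mul_right_cancel₀ pbL.ne'
    linear_combination hc'

end SnTable
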